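/- Let F be a field, n a natural number, and A an n × n matrix over F. Then there exist n × n permutation matrices P and Q, an n × n lower triangular matrix L all of whose diagonal entries equal 1, and an n × n upper triangular matrix U, such that P * A * Q = L * U. -/

import Mathlib

theorem lu_aux (F : Type*) [Field F] : ∀ (n : ℕ) (A : Fin n → Fin n → F),
    ∃ (σ τ : Equiv.Perm (Fin n)) (L U : Fin n → Fin n → F),
      (∀ i j : Fin n, i < j → L i j = 0) ∧
      (∀ i : Fin n, L i i = 1) ∧
      (∀ i j : Fin n, j < i → U i j = 0) ∧
      ∀ i j, A (σ i) (τ j) = ∑ k, L i k * U k j := by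
  intro n
  induction n with
  | zero => 
    intro A
    exact ⟨1, 1, A, A, fun i => i.elim0, fun i => i.elim0, fun i => i.elim0, fun i => i.elim0⟩
  | succ n ih =>
    intro A
    by_cases hA : ∀ i j, A i j = 0
    · refine ⟨1, 1, fun i j => if i = j then 1 else 0, fun _ _ => 0, ?_, ?_, ?_, ?_⟩
      · intro i j h
        simp [h.ne]
      · simp
      · simp
      · simp [hA]
    · push Not at hA
      obtain ⟨p, q, hpq⟩ := hA
      obtain ⟨B, hB⟩ : ∃ B : Fin (n+1) → Fin (n+1) → F,
        ∀ i j, B i j = A (Equiv.swap 0 p i) (Equiv.swap 0 q j) := ⟨_, fun _ _ => rfl⟩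
      have h0 : B 0 0 ≠ 0 := by simpa [hB] using hpq
      obtain ⟨σ, τ, L, U, hL, hL1, hU, h⟩ :=
        ih (fun i j => B i.succ j.succ - B i.succ 0 / B 0 0 * B 0 j.succ)
      refine ⟨Equiv.swap 0 p * Equiv.Perm.decomposeFin.symm (0, σ),
        Equiv.swap 0 q * Equiv.Perm.decomposeFin.symm (0, τ),
        Fin.cons (Fin.cons 1 (fun _ => 0))
          (fun i => Fin.cons (B (σ i).succ 0 / B 0 0) (L i)),
        Fin.cons (Fin.cons (B 0 0) (fun j => B 0 (τ j).succ))
          (fun i => Fin.cons 0 (U i)), ?_, ?_, ?_, ?_⟩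
      · intro i j
        refine Fin.cases ?_ (fun i => ?_) i <;> refine Fin.cases ?_ (fun j => ?_) j <;>
          simp
        exact hL i j
      · intro i
        refine Fin.cases ?_ (fun i => ?_) i <;> simp [hL1]
      · intro i j
        refine Fin.cases ?_ (fun i => ?_) i <;> refine Fin.cases ?_ (fun j => ?_) j <;>
          simp
        exact hU i j
      · intro i j
        simp only [Equiv.Perm.mul_apply, ← hB]
        refine Fin.cases ?_ (fun i => ?_) i <;> refine Fin.cases ?_ (fun j => ?_) j <;>
          simp [Fin.sum_univ_succ, h0]
        rw [← h i j]
        ring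

/-- **LU decomposition with full (row and column) pivoting.**  For any square matrix
`A` over a field `F`, there exist permutations `σ, τ` of the index set, a lower
triangular matrix `L` with unit diagonal, and an upper triangular matrix `U`, such
that `P * A * Q = L * U`, where `P` and `Q` are the permutation matrices of `σ` and
`τ`. -/
theorem exists_lu_decomposition_full_pivoting
    (F : Type*) [Field F] (n : ℕ) (A : Matrix (Fin n) (Fin n) F) :
    ∃ (σ τ : Equiv.Perm (Fin n)) (L U : Matrix (Fin n) (Fin n) F),
      (∀ i j : Fin n, i < j → L i j = 0) ∧
      (∀ i : Fin n, L i i = 1) ∧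
      (∀ i j : Fin n, j < i → U i j = 0) ∧
      (σ.permMatrix F) * A * (τ.permMatrix F) = L * U := by
  obtain ⟨σ, τ, L, U, hL, hL1, hU, h⟩ := lu_aux F n A
  refine ⟨σ, τ⁻¹, Matrix.of L, Matrix.of U, hL, hL1, hU, ?_⟩
  ext i j
  rw [Equiv.Perm.permMatrix, Equiv.Perm.permMatrix, PEquiv.toMatrix_toPEquiv_mul,
    PEquiv.mul_toMatrix_toPEquiv, Matrix.mul_apply]
  exact h i j
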